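/- arXiv:1103.3179 — 4 statements merged into one kernel-verified Lean document; each statement's English description precedes it below -/
import Mathlib

section
/- Let Λ : ℕ → ℝ≥0∞ be monotone nondecreasing, let m be a natural number, and let t : ℕ → ℝ≥0∞ satisfy t i ≤ 1 for every i and ∑'_{i∈ℕ} t i = m. Then ∑'_{i∈ℕ} Λ i * t i ≥ ∑_{i=0}^{m-1} Λ i (sums taken in the extended nonnegative reals [0,∞]). -/
/-! Compare `t` with the weight `w` that is `1` on the first `m` indices and `0` elsewhere.
Splitting `w = min w t + (w - t)` and `t = min w t + (t - w)`, the two weights share the part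
`min w t`. As `t` has at least as much total mass as `w`, the deficit `w - t` has at most the mass
of the excess `t - w`. The deficit lives where `Λ` is at most a threshold `c` and the excess
where `Λ` is at least `c`. -/

open scoped ENNReal

section Weights

variable {ι : Type*} {f w t : ι → ℝ≥0∞}

theorem tsum_tsub_le_tsum_tsub (hw : ∑' i, w i ≠ ∞) (hwt : ∑' i, w i ≤ ∑' i, t i) :
    ∑' i, (w i - t i) ≤ ∑' i, (t i - w i) := by
  have hmin : ∑' i, min (w i) (t i) ≠ ∞ :=
    ne_top_of_le_ne_top hw (ENNReal.tsum_le_tsum fun i ↦ min_le_left _ _)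
  refine (ENNReal.add_le_add_iff_right hmin).1 ?_
  calc ∑' i, (w i - t i) + ∑' i, min (w i) (t i)
      = ∑' i, w i := by simp only [← ENNReal.tsum_add, tsub_add_min]
    _ ≤ ∑' i, t i := hwt
    _ = ∑' i, (t i - w i) + ∑' i, min (w i) (t i) := by
        simp only [← ENNReal.tsum_add, min_comm (w _), tsub_add_min]

theorem tsum_mul_le_tsum_mul_of_threshold {c : ℝ≥0∞} (hle : ∀ i, t i < w i → f i ≤ c)
    (hge : ∀ i, w i < t i → c ≤ f i) (hw : ∑' i, w i ≠ ∞) (hwt : ∑' i, w i ≤ ∑' i, t i) :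
    ∑' i, f i * w i ≤ ∑' i, f i * t i := by
  have deficit_le (i : ι) : f i * (w i - t i) ≤ c * (w i - t i) := by
    rcases le_or_gt (w i) (t i) with h | h
    · simp [tsub_eq_zero_of_le h]
    · gcongr
      exact hle i h
  have le_excess (i : ι) : c * (t i - w i) ≤ f i * (t i - w i) := by
    rcases le_or_gt (t i) (w i) with h | h
    · simp [tsub_eq_zero_of_le h]
    · gcongr
      exact hge i h
  calc ∑' i, f i * w i
      = ∑' i, f i * (w i - t i) + ∑' i, f i * min (w i) (t i) := by
        simp only [← ENNReal.tsum_add, ← mul_add, tsub_add_min]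
    _ ≤ c * ∑' i, (w i - t i) + ∑' i, f i * min (w i) (t i) := by
        rw [← ENNReal.tsum_mul_left]
        exact add_le_add (ENNReal.tsum_le_tsum deficit_le) le_rfl
    _ ≤ c * ∑' i, (t i - w i) + ∑' i, f i * min (w i) (t i) := by
        gcongr c * ?_ + _
        exact tsum_tsub_le_tsum_tsub hw hwt
    _ ≤ ∑' i, f i * (t i - w i) + ∑' i, f i * min (w i) (t i) := by
        rw [← ENNReal.tsum_mul_left]
        exact add_le_add (ENNReal.tsum_le_tsum le_excess) le_rfl
    _ = ∑' i, f i * t i := by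
        simp only [← ENNReal.tsum_add, ← mul_add, min_comm (w _), tsub_add_min]

theorem stmt0_general {s : Finset ι} (hf : ∀ i ∈ s, ∀ j ∉ s, f i ≤ f j)
    (ht : ∀ i ∈ s, t i ≤ 1) (hs : (s.card : ℝ≥0∞) ≤ ∑' i, t i) :
    ∑ i ∈ s, f i ≤ ∑' i, f i * t i := by
  classical
  let w (i : ι) : ℝ≥0∞ := if i ∈ s then 1 else 0
  have tsum_w : ∑' i, w i = s.card := by
    rw [tsum_eq_sum (s := s) fun i hi ↦ if_neg hi]
    simp
  have tsum_mul_w : ∑' i, f i * w i = ∑ i ∈ s, f i := by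
    rw [tsum_eq_sum (s := s) fun i hi ↦ by simp [w, hi]]
    exact Finset.sum_congr rfl fun i hi ↦ by simp [w, hi]
  have mem_of_lt (i : ι) (h : t i < w i) : i ∈ s := by
    by_contra hi
    simp [w, hi] at h
  have notMem_of_lt (i : ι) (h : w i < t i) : i ∉ s := fun hi ↦
    (ht i hi).not_gt (by simpa [w, hi] using h)
  rw [← tsum_mul_w]
  exact tsum_mul_le_tsum_mul_of_threshold (c := s.sup f)
    (fun i h ↦ Finset.le_sup (mem_of_lt i h))
    (fun j h ↦ Finset.sup_le fun i hi ↦ hf i hi j (notMem_of_lt j h))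
    (tsum_w ▸ ENNReal.natCast_ne_top _) (tsum_w ▸ hs)

end Weights

/-- Rearrangement inequality in `ℝ≥0∞`: if `Λ` is monotone nondecreasing, each weight
`t i` lies in `[0,1]`, and the weights total `m`, then the weighted sum of `Λ` is at
least the sum of the `m` smallest values `Λ 0 + ⋯ + Λ (m-1)`. -/
theorem stmt0 (Λ : ℕ → ENNReal) (hΛ : Monotone Λ) (m : ℕ) (t : ℕ → ENNReal)
    (ht1 : ∀ i, t i ≤ 1) (htm : ∑' i, t i = m) :
    ∑ i ∈ Finset.range m, Λ i ≤ ∑' i, Λ i * t i :=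
  stmt0_general (fun i hi j hj ↦ hΛ (by rw [Finset.mem_range] at hi hj; lia))
    (fun i _ ↦ ht1 i) (by rw [Finset.card_range, htm])
end

section
/- Let H be a real Hilbert space, let (e_i)_{i∈ℕ} be a Hilbert basis of H (an orthonormal family whose span is dense), and let Λ : ℕ → ℝ be nonnegative and monotone nondecreasing. Then for every finite orthonormal family ω_1, …, ω_m in H one has ∑_{j=1}^{m} ∑'_{i∈ℕ} Λ i * ⟨ω_j, e_i⟩² ≥ ∑_{i=0}^{m-1} Λ i, where the inner sums of nonnegative terms are taken in the extended nonnegative reals [0,∞]. -/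
open scoped RealInnerProductSpace

/-!
The weights `w i = ∑ j, |⟪ω j, e i⟫|²` satisfy `w i ≤ 1` by Bessel's inequality for `ω`, and their
total mass is the cardinality of the family `ω` by Parseval's identity for `e`. Among all weights
with values in `[0, 1]` and mass at least `#s`, the sum `∑ i, Λ i * w i` is smallest when `w` is the
indicator of a set `s` on which `Λ` takes its smallest values (the bathtub principle).
-/

open scoped ENNReal NNReal

theorem sum_le_tsum_mul_of_card_le_tsum {ι : Type*} {f w : ι → ℝ≥0∞} {c : ℝ≥0∞} {s : Finset ι}
    (hc : c ≠ ∞) (hfc : ∀ i ∈ s, f i ≤ c) (hcf : ∀ i ∉ s, c ≤ f i) (hw : ∀ i, w i ≤ 1)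
    (hs : s.card ≤ ∑' i, w i) :
    ∑ i ∈ s, f i ≤ ∑' i, f i * w i := by
  classical
  -- The pointwise form of `(c - f i) * (1 - w i) ≥ 0` on `s`, and of `(f i - c) * w i ≥ 0` off `s`,
  -- with every term moved to the side where it occurs positively.
  have pointwise (i : ι) :
      (if i ∈ s then f i else 0) + c * w i ≤ f i * w i + if i ∈ s then c else 0 := by
    split_ifs with hi
    · obtain ⟨d, hd⟩ := exists_add_of_le (hw i)
      calc f i + c * w i = f i * w i + (f i * d + c * w i) := by
            rw [← add_assoc, ← mul_add, ← hd, mul_one]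
        _ ≤ f i * w i + (c * d + c * w i) := by gcongr; exact hfc i hi
        _ = f i * w i + c := by rw [← mul_add, add_comm d, ← hd, mul_one]
    · simpa only [zero_add, add_zero] using mul_le_mul_left (hcf i hi) (w i)
  have tsum_indicator (g : ι → ℝ≥0∞) : ∑' i, (if i ∈ s then g i else 0) = ∑ i ∈ s, g i := by
    rw [tsum_eq_sum fun i hi ↦ if_neg hi, Finset.sum_ite_mem, Finset.inter_self]
  have hcs : c * s.card ≠ ∞ := ENNReal.mul_ne_top hc (ENNReal.natCast_ne_top _)
  refine (ENNReal.add_le_add_iff_right hcs).1 ?_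
  calc ∑ i ∈ s, f i + c * s.card
      ≤ ∑ i ∈ s, f i + c * ∑' i, w i := by gcongr
    _ = ∑' i, ((if i ∈ s then f i else 0) + c * w i) := by
        rw [ENNReal.tsum_add, tsum_indicator, ENNReal.tsum_mul_left]
    _ ≤ ∑' i, (f i * w i + if i ∈ s then c else 0) := ENNReal.tsum_le_tsum pointwise
    _ = ∑' i, f i * w i + c * s.card := by
        rw [ENNReal.tsum_add, tsum_indicator, Finset.sum_const, nsmul_eq_mul, mul_comm c]

section InnerProductSpace

variable {𝕜 E ι κ : Type*} [RCLike 𝕜]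

theorem tsum_enorm_inner_sq_le_of_orthonormal [SeminormedAddCommGroup E] [InnerProductSpace 𝕜 E]
    {v : κ → E} (hv : Orthonormal 𝕜 v) (x : E) :
    ∑' j, ‖inner 𝕜 (v j) x‖ₑ ^ 2 ≤ ‖x‖ₑ ^ 2 := by
  simp only [← ofReal_norm, ← ENNReal.ofReal_pow (norm_nonneg _)]
  rw [← ENNReal.ofReal_tsum_of_nonneg (fun _ ↦ sq_nonneg _) (hv.inner_products_summable x)]
  exact ENNReal.ofReal_le_ofReal (hv.tsum_inner_products_le x)

variable [NormedAddCommGroup E] [InnerProductSpace 𝕜 E]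

theorem tsum_enorm_inner_hilbertBasis_sq (b : HilbertBasis ι 𝕜 E) (x : E) :
    ∑' i, ‖inner 𝕜 x (b i)‖ₑ ^ 2 = ‖x‖ₑ ^ 2 := by
  have parseval : HasSum (fun i ↦ ‖inner 𝕜 x (b i)‖ ^ 2) (‖x‖ ^ 2) := by
    simpa [b.repr_apply_apply, norm_inner_symm] using lp.hasSum_norm (by norm_num) (b.repr x)
  simp only [← ofReal_norm, ← ENNReal.ofReal_pow (norm_nonneg _)]
  rw [← ENNReal.ofReal_tsum_of_nonneg (fun _ ↦ sq_nonneg _) parseval.summable, parseval.tsum_eq]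

theorem tsum_tsum_enorm_inner_sq_eq_card (b : HilbertBasis ι 𝕜 E) {v : κ → E}
    (hv : ∀ j, ‖v j‖ₑ = 1) :
    ∑' i, ∑' j, ‖inner 𝕜 (v j) (b i)‖ₑ ^ 2 = ENat.card κ := by
  rw [ENNReal.tsum_comm]
  simp only [tsum_enorm_inner_hilbertBasis_sq, hv, one_pow, ENNReal.tsum_one]

theorem stmt1_general (e : HilbertBasis ι 𝕜 E) {ω : κ → E} (hω : Orthonormal 𝕜 ω) (Λ : ι → ℝ≥0)
    {s : Finset ι} (hΛ : ∀ i ∈ s, ∀ k ∉ s, Λ i ≤ Λ k) (hs : s.card ≤ ENat.card κ) :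
    ∑ i ∈ s, (Λ i : ℝ≥0∞) ≤ ∑' j, ∑' i, Λ i * ‖inner 𝕜 (ω j) (e i)‖ₑ ^ 2 := by
  have weight_le_one (i : ι) : ∑' j, ‖inner 𝕜 (ω j) (e i)‖ₑ ^ 2 ≤ 1 := by
    simpa only [e.orthonormal.enorm_eq_one, one_pow] using
      tsum_enorm_inner_sq_le_of_orthonormal hω (e i)
  have card_le_mass : (s.card : ℝ≥0∞) ≤ ∑' i, ∑' j, ‖inner 𝕜 (ω j) (e i)‖ₑ ^ 2 := by
    rw [tsum_tsum_enorm_inner_sq_eq_card e hω.enorm_eq_one]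
    exact_mod_cast hs
  rw [ENNReal.tsum_comm]
  simp only [ENNReal.tsum_mul_left]
  refine sum_le_tsum_mul_of_card_le_tsum (c := (s.sup Λ : ℝ≥0)) ENNReal.coe_ne_top
    (fun i hi ↦ ?_) (fun k hk ↦ ?_) weight_le_one card_le_mass
  · exact_mod_cast Finset.le_sup hi
  · exact_mod_cast Finset.sup_le fun i hi ↦ hΛ i hi k hk

end InnerProductSpace

theorem ofReal_mul_sq_eq_mul_enorm_sq (a : ℝ≥0) (t : ℝ) :
    ENNReal.ofReal (a * t ^ 2) = a * ‖t‖ₑ ^ 2 := by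
  rw [ENNReal.ofReal_mul a.coe_nonneg, ENNReal.ofReal_coe_nnreal, ← enorm_pow,
    Real.enorm_of_nonneg (sq_nonneg t)]

/-- Trace lemma: if `(e i)` is a Hilbert basis of a real Hilbert space `H` and
`Λ : ℕ → ℝ` is nonnegative and monotone nondecreasing, then for any finite
orthonormal family `ω : Fin m → H` one has
`∑ j, ∑' i, Λ i * ⟪ω j, e i⟫² ≥ ∑_{i<m} Λ i`, inner sums in `ℝ≥0∞`. -/
theorem stmt1 {H : Type*} [NormedAddCommGroup H] [InnerProductSpace ℝ H]
    (e : HilbertBasis ℕ ℝ H) (Λ : ℕ → ℝ) (hΛ0 : ∀ i, 0 ≤ Λ i) (hΛ : Monotone Λ)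
    (m : ℕ) (ω : Fin m → H) (hω : Orthonormal ℝ ω) :
    ENNReal.ofReal (∑ i ∈ Finset.range m, Λ i) ≤
      ∑ j, ∑' i, ENNReal.ofReal (Λ i * ⟪ω j, e i⟫ ^ 2) := by
  lift Λ to ℕ → ℝ≥0 using hΛ0
  simpa only [ENNReal.ofReal_sum_of_nonneg fun _ _ ↦ NNReal.coe_nonneg _,
    ENNReal.ofReal_coe_nnreal, ofReal_mul_sq_eq_mul_enorm_sq, tsum_fintype] using
    stmt1_general e hω Λ (s := Finset.range m) (fun i hi k hk ↦ hΛ (by grind)) (by simp)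
end

section
/- Let H be a real Hilbert space, let (e_i)_{i∈ℕ} be a Hilbert basis of H, let n ≥ 2 be a natural number, let C > 0, and let Λ : ℕ → ℝ be nonnegative, monotone nondecreasing and satisfy Λ i ≥ C * i^{1/(n-1)} for every i ∈ ℕ. Then for every finite orthonormal family ω_1, …, ω_m in H one has ∑_{j=1}^{m} ∑'_{i∈ℕ} Λ i * ⟨ω_j, e_i⟩² ≥ ((n-1)/(4n)) * C * (m^{1 + 1/(n-1)} − m), where the inner sums of nonnegative terms are taken in the extended nonnegative reals [0,∞]. -/
open scoped RealInnerProductSpace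

/-!
Put `a i = ∑ j, |⟪ω j, e i⟫|²`. Bessel's inequality for `ω` gives `a i ≤ 1`, and Parseval's identity
for `e` gives `∑ i, a i = m`. Among all such weights, `∑ i, μ i * a i` with `μ` nondecreasing is
smallest when all the mass sits on the first `m` indices. With `μ i = C * i ^ p ≤ Λ i`, it remains
to sum `(k + 1) ^ (1 + p) ≤ k ^ (1 + p) + (1 + p) * k ^ p + 1` over `k < m`. This last inequality
adds Bernoulli's bound for `k * (k + 1) ^ p` to the subadditivity of the `p`-th power.
-/

open scoped ENNReal

section PowerSums

variable {p : ℝ}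

theorem mul_add_one_rpow_le {x : ℝ} (hx : 0 ≤ x) (hp0 : 0 ≤ p) (hp1 : p ≤ 1) :
    x * (x + 1) ^ p ≤ x ^ (1 + p) + p * x ^ p := by
  rcases hx.eq_or_lt with rfl | hx
  · rw [zero_mul]
    positivity
  have bernoulli : (1 + 1 / x) ^ p ≤ 1 + p * (1 / x) :=
    rpow_one_add_le_one_add_mul_self (by linarith [one_div_pos.2 hx]) hp0 hp1
  calc x * (x + 1) ^ p = x * (x ^ p * (1 + 1 / x) ^ p) := by
        rw [← Real.mul_rpow hx.le (by positivity), mul_one_add, mul_one_div_cancel hx.ne']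
    _ ≤ x * (x ^ p * (1 + p * (1 / x))) := by gcongr
    _ = x ^ (1 + p) + p * x ^ p := by
        rw [Real.rpow_add hx, Real.rpow_one]
        field_simp

theorem add_one_rpow_one_add_le {x : ℝ} (hx : 0 ≤ x) (hp0 : 0 ≤ p) (hp1 : p ≤ 1) :
    (x + 1) ^ (1 + p) ≤ x ^ (1 + p) + (1 + p) * x ^ p + 1 := by
  have subadd : (x + 1) ^ p ≤ x ^ p + 1 := by
    simpa only [Real.one_rpow] using Real.rpow_add_le_add_rpow hx zero_le_one hp0 hp1
  calc (x + 1) ^ (1 + p) = x * (x + 1) ^ p + (x + 1) ^ p := by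
        rw [Real.rpow_add (by positivity), Real.rpow_one, add_one_mul]
    _ ≤ (x ^ (1 + p) + p * x ^ p) + (x ^ p + 1) :=
        add_le_add (mul_add_one_rpow_le hx hp0 hp1) subadd
    _ = x ^ (1 + p) + (1 + p) * x ^ p + 1 := by ring

theorem rpow_one_add_sub_le_mul_sum_range_rpow (hp0 : 0 ≤ p) (hp1 : p ≤ 1) (m : ℕ) :
    (m : ℝ) ^ (1 + p) - m ≤ (1 + p) * ∑ i ∈ Finset.range m, (i : ℝ) ^ p := by
  induction m with
  | zero =>
    have hp : 1 + p ≠ 0 := by positivity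
    simp [Real.zero_rpow hp]
  | succ k ih =>
    rw [Finset.sum_range_succ, mul_add, Nat.cast_succ]
    linarith [add_one_rpow_one_add_le k.cast_nonneg hp0 hp1]

theorem natCast_le_rpow_one_add (hp0 : 0 ≤ p) (m : ℕ) : (m : ℝ) ≤ (m : ℝ) ^ (1 + p) := by
  rcases m.eq_zero_or_pos with rfl | hm
  · rw [Nat.cast_zero]
    positivity
  · exact Real.self_le_rpow_of_one_le (Nat.one_le_cast.2 hm) (by linarith)

end PowerSums

theorem sum_range_le_tsum_mul_of_monotone {μ a : ℕ → ℝ≥0∞} (hμ : Monotone μ) (ha : ∀ i, a i ≤ 1)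
    {m : ℕ} (hm : (m : ℝ≥0∞) ≤ ∑' i, a i) :
    ∑ i ∈ Finset.range m, μ i ≤ ∑' i, μ i * a i := by
  have split (f : ℕ → ℝ≥0∞) : ∑' i, f i = ∑ i ∈ Finset.range m, f i + ∑' i, f (i + m) :=
    (ENNReal.summable.sum_add_tsum_nat_add' (f := f)).symm
  have deficit_le : ∑ i ∈ Finset.range m, (1 - a i) ≤ ∑' i, a (i + m) := by
    have head_ne_top : ∑ i ∈ Finset.range m, a i ≠ ∞ :=
      ENNReal.sum_ne_top.2 fun i _ => ne_top_of_le_ne_top ENNReal.one_ne_top (ha i)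
    refine (ENNReal.add_le_add_iff_left head_ne_top).1 ?_
    rw [← split a, ← Finset.sum_add_distrib]
    simpa only [add_tsub_cancel_of_le (ha _), Finset.sum_const, Finset.card_range,
      nsmul_eq_mul, mul_one] using hm
  calc ∑ i ∈ Finset.range m, μ i
      = ∑ i ∈ Finset.range m, μ i * a i + ∑ i ∈ Finset.range m, μ i * (1 - a i) := by
        simp only [← Finset.sum_add_distrib, ← mul_add, add_tsub_cancel_of_le (ha _), mul_one]
    _ ≤ ∑ i ∈ Finset.range m, μ i * a i + μ m * ∑ i ∈ Finset.range m, (1 - a i) := by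
        rw [Finset.mul_sum]
        gcongr with i hi
        exact hμ (Finset.mem_range.1 hi).le
    _ ≤ ∑ i ∈ Finset.range m, μ i * a i + μ m * ∑' i, a (i + m) := by gcongr
    _ ≤ ∑ i ∈ Finset.range m, μ i * a i + ∑' i, μ (i + m) * a (i + m) := by
        rw [← ENNReal.tsum_mul_left]
        gcongr with i
        exact hμ (Nat.le_add_left m i)
    _ = ∑' i, μ i * a i := (split fun i => μ i * a i).symm

section Orthonormal

variable {𝕜 H : Type*} [RCLike 𝕜] [NormedAddCommGroup H] [InnerProductSpace 𝕜 H]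

theorem tsum_enorm_inner_sq_eq {κ : Type*} (e : HilbertBasis κ 𝕜 H) (x : H) :
    ∑' i, ‖inner 𝕜 x (e i)‖ₑ ^ 2 = ‖x‖ₑ ^ 2 := by
  have parseval : HasSum (fun i => ‖inner 𝕜 x (e i)‖ ^ 2) (‖x‖ ^ 2) := by
    have h := e.hasSum_inner_mul_inner x x
    simp only [← inner_conj_symm (e _) x, RCLike.mul_conj, inner_self_eq_norm_sq_to_K] at h
    exact_mod_cast h
  simp only [← ofReal_norm, ← ENNReal.ofReal_pow (norm_nonneg _)]
  rw [← ENNReal.ofReal_tsum_of_nonneg (fun _ => sq_nonneg _) parseval.summable, parseval.tsum_eq]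

variable {ι : Type*} [Fintype ι] {ω : ι → H}

theorem sum_enorm_inner_sq_le (hω : Orthonormal 𝕜 ω) (x : H) :
    ∑ j, ‖inner 𝕜 (ω j) x‖ₑ ^ 2 ≤ ‖x‖ₑ ^ 2 := by
  simp only [← ofReal_norm, ← ENNReal.ofReal_pow (norm_nonneg _)]
  rw [← ENNReal.ofReal_sum_of_nonneg fun _ _ => sq_nonneg _]
  exact ENNReal.ofReal_le_ofReal (hω.sum_inner_products_le x)

theorem sum_range_card_le_sum_tsum_mul_enorm_inner_sq (e : HilbertBasis ℕ 𝕜 H)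
    (hω : Orthonormal 𝕜 ω) {μ : ℕ → ℝ≥0∞} (hμ : Monotone μ) :
    ∑ i ∈ Finset.range (Fintype.card ι), μ i ≤
      ∑ j, ∑' i, μ i * ‖inner 𝕜 (ω j) (e i)‖ₑ ^ 2 := by
  have bessel (i : ℕ) : ∑ j, ‖inner 𝕜 (ω j) (e i)‖ₑ ^ 2 ≤ 1 := by
    simpa only [e.orthonormal.enorm_eq_one, one_pow] using sum_enorm_inner_sq_le hω (e i)
  have mass : ∑' i, ∑ j, ‖inner 𝕜 (ω j) (e i)‖ₑ ^ 2 = Fintype.card ι := by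
    rw [Summable.tsum_finsetSum fun _ _ => ENNReal.summable]
    simp only [tsum_enorm_inner_sq_eq, hω.enorm_eq_one, one_pow, Finset.sum_const,
      Finset.card_univ, nsmul_eq_mul, mul_one]
  calc ∑ i ∈ Finset.range (Fintype.card ι), μ i
      ≤ ∑' i, μ i * ∑ j, ‖inner 𝕜 (ω j) (e i)‖ₑ ^ 2 :=
        sum_range_le_tsum_mul_of_monotone hμ bessel mass.ge
    _ = ∑ j, ∑' i, μ i * ‖inner 𝕜 (ω j) (e i)‖ₑ ^ 2 := by
        simp only [Finset.mul_sum]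
        exact Summable.tsum_finsetSum fun _ _ => ENNReal.summable

theorem stmt2_general (e : HilbertBasis ℕ 𝕜 H) {p C : ℝ} (hp0 : 0 ≤ p) (hp1 : p ≤ 1) (hC : 0 ≤ C)
    {Λ : ℕ → ℝ} (hΛ : ∀ i : ℕ, C * (i : ℝ) ^ p ≤ Λ i) (hω : Orthonormal 𝕜 ω) :
    ENNReal.ofReal (C / (1 + p) * ((Fintype.card ι : ℝ) ^ (1 + p) - Fintype.card ι)) ≤
      ∑ j, ∑' i, ENNReal.ofReal (Λ i * ‖inner 𝕜 (ω j) (e i)‖ ^ 2) := by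
  set m := Fintype.card ι
  have monotone_power : Monotone fun i : ℕ => ENNReal.ofReal (C * (i : ℝ) ^ p) := fun i k hik =>
    ENNReal.ofReal_le_ofReal (by gcongr)
  calc ENNReal.ofReal (C / (1 + p) * ((m : ℝ) ^ (1 + p) - m))
      ≤ ENNReal.ofReal (C / (1 + p) * ((1 + p) * ∑ i ∈ Finset.range m, (i : ℝ) ^ p)) := by
        gcongr
        exact rpow_one_add_sub_le_mul_sum_range_rpow hp0 hp1 m
    _ = ∑ i ∈ Finset.range m, ENNReal.ofReal (C * (i : ℝ) ^ p) := by
        rw [← mul_assoc, div_mul_cancel₀ C (by positivity), Finset.mul_sum,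
          ENNReal.ofReal_sum_of_nonneg fun i _ => by positivity]
    _ ≤ ∑ j, ∑' i : ℕ, ENNReal.ofReal (C * (i : ℝ) ^ p) * ‖inner 𝕜 (ω j) (e i)‖ₑ ^ 2 :=
        sum_range_card_le_sum_tsum_mul_enorm_inner_sq e hω monotone_power
    _ ≤ ∑ j, ∑' i, ENNReal.ofReal (Λ i * ‖inner 𝕜 (ω j) (e i)‖ ^ 2) := by
        gcongr with j _ i
        rw [ENNReal.ofReal_mul' (sq_nonneg _), ENNReal.ofReal_pow (norm_nonneg _), ofReal_norm]
        gcongr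
        exact hΛ i

end Orthonormal

theorem sub_one_div_four_mul_mul_rpow_sub_le {t C : ℝ} (ht : 1 < t) (hC : 0 ≤ C) (m : ℕ) :
    (t - 1) / (4 * t) * C * ((m : ℝ) ^ (1 + 1 / (t - 1)) - m) ≤
      C / (1 + 1 / (t - 1)) * ((m : ℝ) ^ (1 + 1 / (t - 1)) - m) := by
  have h : 0 < t - 1 := sub_pos.2 ht
  have coeff_le : (t - 1) / (4 * t) * C ≤ C / (1 + 1 / (t - 1)) :=
    calc (t - 1) / (4 * t) * C ≤ (t - 1) / t * C := by
          gcongr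
          linarith
      _ = C / (1 + 1 / (t - 1)) := by
          field_simp
          ring
  have rpow_sub_nonneg : 0 ≤ (m : ℝ) ^ (1 + 1 / (t - 1)) - m :=
    sub_nonneg.2 (natCast_le_rpow_one_add (by positivity) m)
  gcongr

/-- Abstract Lieb–Thirring type inequality: if `(e i)` is a Hilbert basis of a real
Hilbert space `H`, `n ≥ 2`, `C > 0`, and `Λ : ℕ → ℝ` is nonnegative, monotone
nondecreasing with `Λ i ≥ C * i^(1/(n-1))`, then for every orthonormal family
`ω : Fin m → H`,
`∑ j, ∑' i, Λ i * ⟪ω j, e i⟫² ≥ ((n-1)/(4n)) * C * (m^(1 + 1/(n-1)) - m)`. -/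
theorem stmt2 {H : Type*} [NormedAddCommGroup H] [InnerProductSpace ℝ H]
    (e : HilbertBasis ℕ ℝ H) (n : ℕ) (hn : 2 ≤ n) (C : ℝ) (hC : 0 < C)
    (Λ : ℕ → ℝ) (hΛ0 : ∀ i, 0 ≤ Λ i) (hΛ : Monotone Λ)
    (hΛC : ∀ i : ℕ, C * (i : ℝ) ^ (1 / ((n : ℝ) - 1)) ≤ Λ i)
    (m : ℕ) (ω : Fin m → H) (hω : Orthonormal ℝ ω) :
    ENNReal.ofReal ((((n : ℝ) - 1) / (4 * n)) * C *
        ((m : ℝ) ^ (1 + 1 / ((n : ℝ) - 1)) - m)) ≤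
      ∑ j, ∑' i, ENNReal.ofReal (Λ i * ⟪ω j, e i⟫ ^ 2) := by
  have hn1 : (1 : ℝ) ≤ (n : ℝ) - 1 := by linarith [(Nat.ofNat_le_cast (α := ℝ)).2 hn]
  have hp1 : 1 / ((n : ℝ) - 1) ≤ 1 := div_le_one_of_le₀ hn1 (by linarith)
  exact (ENNReal.ofReal_le_ofReal
    (sub_one_div_four_mul_mul_rpow_sub_le (by linarith) hC.le m)).trans
    (by simpa using stmt2_general e (by positivity) hp1 hC.le hΛC hω)
end

section
/- Let q ≥ 0 and c ≥ 1 be real numbers and let (a_k)_{k≥1} be a sequence of nonnegative real numbers satisfying a_k ≤ c * 2^{q k} * (a_{k-1} + 1)² for all k ≥ 2. Then for every k ≥ 1 one has a_k ≤ (2c * 8^q * (a_1 + 1))^{2^{k-1}}; in particular, the sequence (a_k)^{2^{-k}} is bounded above by (2c * 8^q * (a_1 + 1))^{1/2}. -/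
/-!
Since `b n = a n + 1 ≥ 1`, the additive constant in `a (n + 1) ≤ C * r ^ n * (a n + 1) ^ 2` costs
only a factor of two: `b (n + 1) ≤ 2 * C * r ^ n * b n ^ 2`. The rescaling
`B n = 2 * C * r ^ (n + 1) * b n` absorbs the geometric coefficient, because
`r ^ (n + 2) * r ^ n = (r ^ (n + 1)) ^ 2`. Hence `B (n + 1) ≤ B n ^ 2`, and iterating gives
`a n ≤ B n ≤ B 0 ^ 2 ^ n`. Indexing from `1` with coefficients `c * 2 ^ (q * k)` amounts to
`C = c * 4 ^ q` and `r = 2 ^ q`, whence the constant `2 * C * r = 2 * c * 8 ^ q`.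
-/

section OrderedSemiring

variable {R : Type*} [PartialOrder R]

theorem le_pow_pow_of_succ_le_pow [Semiring R] [IsOrderedRing R] {u : ℕ → R} {p : ℕ}
    (hu : ∀ n, 0 ≤ u n) (hsucc : ∀ n, u (n + 1) ≤ u n ^ p) (n : ℕ) :
    u n ≤ u 0 ^ p ^ n := by
  induction n with
  | zero => simp
  | succ n ih =>
    calc u (n + 1) ≤ u n ^ p := hsucc n
      _ ≤ (u 0 ^ p ^ n) ^ p := pow_le_pow_left₀ (hu n) ih p
      _ = u 0 ^ p ^ (n + 1) := by rw [← pow_mul, pow_succ]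

theorem add_one_le_two_mul_of_le_mul_add_one_sq [Semiring R] [IsOrderedRing R] {x y C : R}
    (hC : 1 ≤ C) (hy : 0 ≤ y) (hx : x ≤ C * (y + 1) ^ 2) :
    x + 1 ≤ 2 * C * (y + 1) ^ 2 := by
  have h_one_le : 1 ≤ C * (y + 1) ^ 2 :=
    one_le_mul_of_one_le_of_one_le hC (one_le_pow₀ (le_add_of_nonneg_left hy))
  calc x + 1 ≤ C * (y + 1) ^ 2 + C * (y + 1) ^ 2 := add_le_add hx h_one_le
    _ = 2 * C * (y + 1) ^ 2 := by rw [mul_assoc, two_mul]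

variable [CommSemiring R] [IsOrderedRing R]

theorem mul_pow_mul_le_pow_two_pow {b : ℕ → R} {K r : R} (hK : 0 ≤ K) (hr : 0 ≤ r)
    (hb : ∀ n, 0 ≤ b n) (hsucc : ∀ n, b (n + 1) ≤ K * r ^ n * b n ^ 2) (n : ℕ) :
    K * r ^ (n + 1) * b n ≤ (K * r * b 0) ^ 2 ^ n := by
  have hcoeff (m : ℕ) : 0 ≤ K * r ^ m := mul_nonneg hK (pow_nonneg hr m)
  have hrescaled (m : ℕ) : K * r ^ (m + 2) * b (m + 1) ≤ (K * r ^ (m + 1) * b m) ^ 2 :=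
    calc K * r ^ (m + 2) * b (m + 1) ≤ K * r ^ (m + 2) * (K * r ^ m * b m ^ 2) :=
          mul_le_mul_of_nonneg_left (hsucc m) (hcoeff _)
      _ = (K * r ^ (m + 1) * b m) ^ 2 := by ring
  simpa only [zero_add, pow_one] using
    le_pow_pow_of_succ_le_pow (u := fun m ↦ K * r ^ (m + 1) * b m)
      (fun m ↦ mul_nonneg (hcoeff _) (hb m)) hrescaled n

theorem le_pow_two_pow_of_succ_le_mul_add_one_sq {a : ℕ → R} {C r : R} (hC : 1 ≤ C) (hr : 1 ≤ r)
    (ha : ∀ n, 0 ≤ a n) (hsucc : ∀ n, a (n + 1) ≤ C * r ^ n * (a n + 1) ^ 2) (n : ℕ) :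
    a n ≤ (2 * C * r * (a 0 + 1)) ^ 2 ^ n := by
  have hcoeff (m : ℕ) : 1 ≤ C * r ^ m := one_le_mul_of_one_le_of_one_le hC (one_le_pow₀ hr)
  have hshift_nonneg (m : ℕ) : 0 ≤ a m + 1 := add_nonneg (ha m) zero_le_one
  have hshift_succ (m : ℕ) : a (m + 1) + 1 ≤ 2 * C * r ^ m * (a m + 1) ^ 2 := by
    simpa only [mul_assoc] using
      add_one_le_two_mul_of_le_mul_add_one_sq (hcoeff m) (ha m) (hsucc m)
  have htwo_mul_C : 1 ≤ 2 * C := one_le_mul_of_one_le_of_one_le one_le_two hC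
  calc a n ≤ a n + 1 := le_add_of_nonneg_right zero_le_one
    _ ≤ 2 * C * r ^ (n + 1) * (a n + 1) :=
      le_mul_of_one_le_left (hshift_nonneg n)
        (one_le_mul_of_one_le_of_one_le htwo_mul_C (one_le_pow₀ hr))
    _ ≤ (2 * C * r * (a 0 + 1)) ^ 2 ^ n :=
      mul_pow_mul_le_pow_two_pow (zero_le_one.trans htwo_mul_C) (zero_le_one.trans hr)
        hshift_nonneg hshift_succ n

end OrderedSemiring

theorem rpow_inv_mul_le_rpow_inv_of_le_pow {x y p : ℝ} {m : ℕ} (hx : 0 ≤ x) (hy : 0 ≤ y)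
    (hp : 0 ≤ p) (hm : m ≠ 0) (h : x ≤ y ^ m) :
    x ^ (m * p)⁻¹ ≤ y ^ p⁻¹ := by
  calc x ^ (m * p)⁻¹ ≤ (y ^ m) ^ (m * p)⁻¹ := Real.rpow_le_rpow hx h (by positivity)
    _ = y ^ p⁻¹ := by
      rw [mul_inv, Real.rpow_mul (pow_nonneg hy m), Real.pow_rpow_inv_natCast hy hm]

/-- Abstract Alikakos–Moser iteration lemma: if `q ≥ 0`, `c ≥ 1` and the nonnegative
sequence `a` satisfies `a k ≤ c * 2^(q k) * (a (k-1) + 1)^2` for `k ≥ 2`, then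
`a k ≤ (2c * 8^q * (a 1 + 1))^(2^(k-1))` for all `k ≥ 1`; in particular
`(a k)^(2^(-k)) ≤ (2c * 8^q * (a 1 + 1))^(1/2)`. -/
theorem stmt4 (q c : ℝ) (hq : 0 ≤ q) (hc : 1 ≤ c) (a : ℕ → ℝ)
    (ha0 : ∀ k, 0 ≤ a k)
    (hrec : ∀ k, 2 ≤ k → a k ≤ c * (2 : ℝ) ^ (q * (k : ℝ)) * (a (k - 1) + 1) ^ 2) :
    ∀ k, 1 ≤ k →
      a k ≤ (2 * c * (8 : ℝ) ^ q * (a 1 + 1)) ^ (2 ^ (k - 1)) ∧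
      a k ^ ((2 : ℝ) ^ (-(k : ℝ))) ≤ (2 * c * (8 : ℝ) ^ q * (a 1 + 1)) ^ ((1 : ℝ) / 2) := by
  have hr : 1 ≤ (2 : ℝ) ^ q := Real.one_le_rpow one_le_two hq
  have hC : 1 ≤ c * ((2 : ℝ) ^ q) ^ 2 := one_le_mul_of_one_le_of_one_le hc (one_le_pow₀ hr)
  have hbase_eq : 2 * c * (8 : ℝ) ^ q * (a 1 + 1) =
      2 * (c * ((2 : ℝ) ^ q) ^ 2) * (2 : ℝ) ^ q * (a 1 + 1) := by
    rw [show (8 : ℝ) = 2 ^ 3 by norm_num, ← Real.rpow_pow_comm zero_le_two]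
    ring
  have hsucc (n : ℕ) :
      a (n + 2) ≤ c * ((2 : ℝ) ^ q) ^ 2 * ((2 : ℝ) ^ q) ^ n * (a (n + 1) + 1) ^ 2 := by
    have h := hrec (n + 2) (Nat.le_add_left 2 n)
    rwa [Real.rpow_mul_natCast zero_le_two, pow_add, mul_comm (_ ^ n), ← mul_assoc] at h
  intro k hk
  obtain ⟨n, rfl⟩ := Nat.exists_eq_add_of_le' hk
  have hbound : a (n + 1) ≤ (2 * c * (8 : ℝ) ^ q * (a 1 + 1)) ^ 2 ^ n :=
    hbase_eq ▸ le_pow_two_pow_of_succ_le_mul_add_one_sq (a := fun m ↦ a (m + 1)) hC hr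
      (fun m ↦ ha0 (m + 1)) hsucc n
  have hbase : 0 ≤ 2 * c * (8 : ℝ) ^ q * (a 1 + 1) :=
    mul_nonneg (by positivity) (add_nonneg (ha0 1) zero_le_one)
  have hexp : (2 : ℝ) ^ (-((n + 1 : ℕ) : ℝ)) = (((2 ^ n : ℕ) : ℝ) * 2)⁻¹ := by
    rw [Real.rpow_neg zero_le_two, Real.rpow_natCast, pow_succ, Nat.cast_pow, Nat.cast_ofNat]
  refine ⟨hbound, ?_⟩
  rw [hexp, one_div]
  exact rpow_inv_mul_le_rpow_inv_of_le_pow (ha0 _) hbase zero_le_two (by positivity) hbound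
end
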